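/- arXiv:1304.6059 — 3 statements merged into one kernel-verified Lean document; each statement's English description precedes it below -/
import Mathlib

section
/- Let F : A → A' be an additive functor to an additive category A'. Then F factors through u : A → A[S⁻¹]_add if and only if F(s) is an isomorphism for every s ∈ S; moreover, if F(s) is an isomorphism for every s ∈ S, then there exists a unique additive functor G : A[S⁻¹]_add → A' with G ∘ u = F. -/
open CategoryTheory Limits Pretriangulated ZeroObject

universe v u v' u'

section TriangulatedPrelude

variable {C : Type u} [Category.{v} C] [HasZeroObject C] [HasShift C ℤ] [Preadditive C]
  [∀ n : ℤ, (shiftFunctor C n).Additive] [Pretriangulated C]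

/-- The objects of the smallest strict full triangulated subcategory of `C`
containing the set of objects `B`. -/
inductive genSub (B : Set C) : C → Prop
  | of (X : C) (hX : X ∈ B) : genSub B X
  | zero (X : C) (hX : IsZero X) : genSub B X
  | shift (X : C) (n : ℤ) (hX : genSub B X) : genSub B (X⟦n⟧)
  | ext₂ (T : Triangle C) (hT : T ∈ distTriang C) (h₁ : genSub B T.obj₁)
      (h₃ : genSub B T.obj₃) : genSub B T.obj₂

/-- The triangulated subcategory of `C` generated by `B`. -/
def genSubcat (B : Set C) : ObjectProperty C :=
  ObjectProperty.isoClosure (genSub B)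

instance (B : Set C) : (genSubcat B).IsTriangulated :=
  have : ObjectProperty.IsTriangulated (genSub B) :=
    { exists_zero := ⟨0, isZero_zero _, genSub.zero _ (isZero_zero _)⟩
      isStableUnderShiftBy := fun n => ⟨fun X h => genSub.shift X n h⟩
      ext₂' := fun T hT h₁ h₃ =>
        ObjectProperty.le_isoClosure _ _ (genSub.ext₂ T hT h₁ h₃) }
  inferInstanceAs (ObjectProperty.isoClosure (genSub B)).IsTriangulated

/-- The extension-closure of a class of objects `E`: the smallest class containing `E`
and `0` and such that for any distinguished triangle `X ⟶ Y ⟶ Z` with `X, Z` in the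
class, `Y` is also in the class. -/
inductive extClosure (E : Set C) : C → Prop
  | of (X : C) (hX : X ∈ E) : extClosure E X
  | zero (X : C) (hX : IsZero X) : extClosure E X
  | ext₂ (T : Triangle C) (hT : T ∈ distTriang C) (h₁ : extClosure E T.obj₁)
      (h₃ : extClosure E T.obj₃) : extClosure E T.obj₂

/-- `D_{[i,j]}`: the extension-closure of `∪_{i ≤ l ≤ j} D[l]`. -/
def shiftClosure (D : Set C) (i j : ℤ) : Set C :=
  extClosure {X | ∃ (Y : C) (l : ℤ), i ≤ l ∧ l ≤ j ∧ Y ∈ D ∧ X = Y⟦l⟧}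

/-- `D_{≥ i} = ∪_{k ≥ i} D_{[i,k]}`. -/
def shiftClosureGE (D : Set C) (i : ℤ) : Set C := {X | ∃ k, i ≤ k ∧ X ∈ shiftClosure D i k}

/-- `D_{≤ j} = ∪_{k ≤ j} D_{[k,j]}`. -/
def shiftClosureLE (D : Set C) (j : ℤ) : Set C := {X | ∃ k, k ≤ j ∧ X ∈ shiftClosure D k j}

/-- A set of objects `D` is weakly negative if `0 ∈ D` and `Hom(X, Y[i]) = 0`
for all `X, Y ∈ D` and all `i ≥ 2`. -/
def WeaklyNegative (D : Set C) : Prop :=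
  (0 : C) ∈ D ∧ ∀ X ∈ D, ∀ Y ∈ D, ∀ i : ℤ, 2 ≤ i → ∀ f : X ⟶ (Y⟦i⟧), f = 0

end TriangulatedPrelude

attribute [local instance] Limits.hasBinaryBiproducts_of_finite_biproducts

section KPrelude

variable {A : Type u} [Category.{v} A] [Preadditive A] [HasZeroObject A] [HasFiniteBiproducts A]

/-- The two-term cochain complex with `P` in degree `n` and `Q` in degree `n + 1`,
with differential given by `f : P ⟶ Q` (and all other terms `0`).
In particular, `twoComplex (-1) f` is the cone of a morphism `f` of `A`. -/
noncomputable def twoComplex (n : ℤ) {P Q : A} (f : P ⟶ Q) : CochainComplex A ℤ where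
  X i := if i = n then P else if i = n + 1 then Q else 0
  d i j :=
    if hij : i = n ∧ j = n + 1 then
      eqToHom (by simp [hij.1]) ≫ f ≫
        eqToHom (by simp [hij.2, show ¬ ((n : ℤ) + 1 = n) by omega])
    else 0
  shape i j hij := by
    rw [dif_neg]
    rintro ⟨rfl, rfl⟩
    exact hij rfl
  d_comp_d' i j k _ _ := by
    by_cases h1 : i = n ∧ j = n + 1
    · by_cases h2 : j = n ∧ k = n + 1
      · obtain ⟨h1a, h1b⟩ := h1; obtain ⟨h2a, h2b⟩ := h2; omega
      · rw [dif_neg h2, comp_zero]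
    · rw [dif_neg h1, zero_comp]

/-- The chain map from the two-term complex (in degrees `n`, `n + 1`) determined by
`f : P ⟶ Q` to the complex concentrated in degree `n` with value `M`, whose degree `n`
component is `g : P ⟶ M`. -/
noncomputable def twoComplexToSingle (n : ℤ) {P Q M : A} (f : P ⟶ Q) (g : P ⟶ M) :
    twoComplex n f ⟶ (HomologicalComplex.single A (ComplexShape.up ℤ) n).obj M where
  f i :=
    if h : i = n then
      eqToHom (by simp [twoComplex, h]) ≫ g ≫
        (HomologicalComplex.singleObjXSelf (ComplexShape.up ℤ) n M).inv ≫ eqToHom (by rw [h])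
    else 0
  comm' i j hij := by
    simp only [ComplexShape.up_Rel] at hij
    by_cases hj : j = n
    · have hi : ¬ (i = n ∧ j = n + 1) := by rintro ⟨rfl, rfl⟩; omega
      have hd : (twoComplex n f).d i j = 0 := by
        exact dif_neg hi
      rw [hd, zero_comp]
      have : i ≠ n := by omega
      rw [dif_neg this, zero_comp]
    · rw [dif_neg hj]
      rw [comp_zero]
      have : ((HomologicalComplex.single A (ComplexShape.up ℤ) n).obj M).d i j = 0 := by simp
      rw [this, comp_zero]

/-- The quotient functor `C^b(A) ⥤ K(A)` (restricted from all complexes). -/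
noncomputable abbrev homotopyQ : CochainComplex A ℤ ⥤ HomotopyCategory A (ComplexShape.up ℤ) :=
  HomotopyCategory.quotient A (ComplexShape.up ℤ)

/-- The canonical embedding of `A` into the homotopy category, as complexes concentrated
in degree `0`. -/
noncomputable abbrev iotaA : A ⥤ HomotopyCategory A (ComplexShape.up ℤ) :=
  HomologicalComplex.single A (ComplexShape.up ℤ) 0 ⋙ homotopyQ

/-- `B`: the set of cones of elements of `S`, viewed in the homotopy category. -/
def coneSet (S : MorphismProperty A) : Set (HomotopyCategory A (ComplexShape.up ℤ)) :=
  {X | ∃ (P Q : A) (s : P ⟶ Q), S s ∧ X = homotopyQ.obj (twoComplex (-1) s)}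

/-- The Verdier localization functor of the homotopy category by the triangulated
subcategory `𝔻` generated by the cones of elements of `S`. -/
noncomputable abbrev locQ (S : MorphismProperty A) :
    HomotopyCategory A (ComplexShape.up ℤ) ⥤ (genSubcat (coneSet S)).trW.Localization :=
  (genSubcat (coneSet S)).trW.Q

/-- The composite functor `A ⥤ K(A) ⥤ K(A)/𝔻`. -/
noncomputable abbrev uBig (S : MorphismProperty A) :
    A ⥤ (genSubcat (coneSet S)).trW.Localization :=
  iotaA ⋙ locQ S

/-- `A[S⁻¹]_add`: the full subcategory of the Verdier quotient whose
objects are those of `A` (viewed as complexes concentrated in degree `0`). -/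
def AddLoc (S : MorphismProperty A) : Type u := A

noncomputable instance (S : MorphismProperty A) : Category (AddLoc S) where
  Hom X Y := (uBig S).obj X ⟶ (uBig S).obj Y
  id X := 𝟙 ((uBig S).obj X)
  comp f g := f ≫ g

/-- The canonical functor `u : A ⥤ A[S⁻¹]_add` induced by the localization functor. -/
noncomputable def uFun (S : MorphismProperty A) : A ⥤ AddLoc S where
  obj X := X
  map f := (uBig S).map f
  map_id X := (uBig S).map_id X
  map_comp f g := (uBig S).map_comp f g

noncomputable instance (S : MorphismProperty A) : Preadditive (AddLoc S) where
  homGroup X Y := inferInstanceAs (AddCommGroup ((uBig S).obj X ⟶ (uBig S).obj Y))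
  add_comp P Q R f f' g :=
    @Preadditive.add_comp _ _ _ ((uBig S).obj P) ((uBig S).obj Q) ((uBig S).obj R) f f' g
  comp_add P Q R f g g' :=
    @Preadditive.comp_add _ _ _ ((uBig S).obj P) ((uBig S).obj Q) ((uBig S).obj R) f g g'

end KPrelude

set_option linter.unusedSectionVars false

section PartOne

open CochainComplex HomComplex

variable {A : Type u} [Category.{v} A] [Preadditive A] [HasZeroObject A] [HasFiniteBiproducts A]

/-- recognizing a cone -/
lemma aux_cone_iso {P Q : A} (s : P ⟶ Q) (K : CochainComplex A ℤ)
    (a : P ≅ K.X (-1)) (b : Q ≅ K.X 0) (hd : a.hom ≫ K.d (-1) 0 = s ≫ b.hom)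
    (hz : ∀ i, i ≠ -1 → i ≠ 0 → IsZero (K.X i)) :
    Nonempty (mappingCone ((HomologicalComplex.single A (ComplexShape.up ℤ) 0).map s) ≅ K) := by
  let φ := (HomologicalComplex.single A (ComplexShape.up ℤ) 0).map s
  let β : (HomologicalComplex.single A (ComplexShape.up ℤ) 0).obj Q ⟶ K :=
    HomologicalComplex.mkHomFromSingle b.hom (fun k hk => by
      simp only [ComplexShape.up_Rel] at hk
      exact (hz k (by omega) (by omega)).eq_of_tgt _ _)
  let α : Cochain ((HomologicalComplex.single A (ComplexShape.up ℤ) 0).obj P) K (-1) :=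
    Cochain.fromSingleMk (p := 0) (q := -1) a.hom (by omega)
  have hαβ : δ (-1) 0 α = Cochain.ofHom (φ ≫ β) := by
    refine (Cochain.δ_fromSingleMk (p := 0) (q := -1) a.hom (by omega) 0 0 (by omega)).trans ?_
    rw [hd]
    apply (Cochain.fromSingleEquiv (p := 0) (q := 0) (n := 0) (X := P) (K := K) (by omega)).injective
    rw [Cochain.fromSingleEquiv_fromSingleMk]
    change _ = (HomologicalComplex.singleObjXSelf (.up ℤ) 0 P).inv ≫ (Cochain.ofHom (φ ≫ β)).v 0 0 _
    rw [Cochain.ofHom_v, HomologicalComplex.comp_f, HomologicalComplex.mkHomFromSingle_f,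
      HomologicalComplex.single_map_f_self]
    simp
  have hα : α.v 0 (-1) (by omega) = (HomologicalComplex.singleObjXSelf (.up ℤ) 0 P).hom ≫ a.hom :=
    Cochain.fromSingleMk_v (p := 0) (q := -1) a.hom (by omega)
  let ψ := mappingCone.desc φ α β hαβ
  have hψ : (mappingCone.inl φ).v 0 (-1) (by omega) ≫ ψ.f (-1) =
      (HomologicalComplex.singleObjXSelf (.up ℤ) 0 P).hom ≫ a.hom := by
    rw [← hα]; exact mappingCone.inl_v_desc_f _ _ _ _ _ _ _
  have key : ∀ i, IsIso (ψ.f i) := by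
    intro i
    have hmz : ∀ j, j ≠ 0 → ∀ X : A,
      IsZero (((HomologicalComplex.single A (ComplexShape.up ℤ) 0).obj X).X j) :=
      fun j hj X => HomologicalComplex.isZero_single_obj_X _ _ _ _ hj
    by_cases h0 : i = 0
    · subst h0
      refine ⟨b.inv ≫ (HomologicalComplex.singleObjXSelf (.up ℤ) 0 Q).inv ≫
        (mappingCone.inr φ).f 0, ?_, ?_⟩
      · refine mappingCone.ext_from φ 1 0 (by omega) ?_ ?_
        · exact (hmz 1 (by omega) _).eq_of_src _ _
        · simp [ψ, β]
      · simp [ψ, β]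
    · by_cases h1 : i = -1
      · subst h1
        refine ⟨a.inv ≫ (HomologicalComplex.singleObjXSelf (.up ℤ) 0 P).inv ≫
          (mappingCone.inl φ).v 0 (-1) (by omega), ?_, ?_⟩
        · refine mappingCone.ext_from φ 0 (-1) (by omega) ?_ ?_
          · rw [reassoc_of% hψ]; simp
          · exact (hmz (-1) (by omega) _).eq_of_src _ _
        · simp only [Category.assoc]; rw [hψ]; simp
      · have h1 : IsZero ((mappingCone φ).X i) := by
          rw [mappingCone.isZero_X_iff]
          exact ⟨hmz _ (by omega) _, hmz _ (by omega) _⟩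
        have h2 := hz i (by omega) (by omega)
        exact ⟨0, h1.eq_of_src _ _, h2.eq_of_src _ _⟩
  have : IsIso ψ := HomologicalComplex.Hom.isIso_of_components ψ
  exact ⟨asIso ψ⟩

lemma twoComplex_isZero (n : ℤ) {P Q : A} (s : P ⟶ Q) (i : ℤ) (h : i ≠ n) (h' : i ≠ n + 1) :
    IsZero ((twoComplex n s).X i) := by
  have : (twoComplex n s).X i = 0 := by simp [twoComplex, h, h']
  rw [this]; exact isZero_zero _

lemma twoComplex_d_eq (n : ℤ) {P Q : A} (s : P ⟶ Q) (m : ℤ) (hm : m = n + 1) :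
    (twoComplex n s).d n m = eqToHom (by simp [twoComplex]) ≫ s ≫
      eqToHom (by simp [twoComplex, hm]) :=
  dif_pos ⟨rfl, hm⟩

lemma cone_triangle {P Q : A} (s : P ⟶ Q) :
    ∃ (g : iotaA.obj Q ⟶ homotopyQ.obj (twoComplex (-1) s))
      (h : homotopyQ.obj (twoComplex (-1) s) ⟶ (iotaA.obj P)⟦(1 : ℤ)⟧),
      Triangle.mk (iotaA.map s) g h ∈ distTriang (HomotopyCategory A (ComplexShape.up ℤ)) := by
  obtain ⟨e⟩ := aux_cone_iso s (twoComplex (-1) s) (eqToIso (by simp [twoComplex]))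
    (eqToIso (by simp [twoComplex])) (by
      rw [twoComplex_d_eq (-1) s 0 (by omega), eqToIso.hom, eqToIso.hom, eqToHom_trans_assoc,
        eqToHom_refl, Category.id_comp])
    (fun i h h' => twoComplex_isZero _ _ _ h (by simpa using h'))
  have hT := HomotopyCategory.mappingCone_triangleh_distinguished
    ((HomologicalComplex.single A (ComplexShape.up ℤ) 0).map s)
  let T := CochainComplex.mappingCone.triangleh
    ((HomologicalComplex.single A (ComplexShape.up ℤ) 0).map s)
  let e' : T.obj₃ ≅ homotopyQ.obj (twoComplex (-1) s) := homotopyQ.mapIso e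
  refine ⟨T.mor₂ ≫ e'.hom, e'.inv ≫ T.mor₃, isomorphic_distinguished _ hT _ ?_⟩
  exact Triangle.isoMk _ _ (Iso.refl _) (Iso.refl _) e'.symm 
    ((Category.comp_id _).trans (Category.id_comp _).symm)
    (by
      refine Eq.trans ?_ (Category.id_comp _).symm
      change (T.mor₂ ≫ e'.hom) ≫ e'.inv = T.mor₂
      simp)
    (by
      change (e'.inv ≫ T.mor₃) ≫ (CategoryTheory.shiftFunctor _ (1 : ℤ)).map (𝟙 T.obj₁) =
        e'.inv ≫ T.mor₃
      simp)

/-- strictly bounded above -/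
def KLE (n : ℤ) : ObjectProperty (HomotopyCategory A (ComplexShape.up ℤ)) := fun X =>
  ∃ K : CochainComplex A ℤ, (∀ i, n < i → IsZero (K.X i)) ∧ Nonempty (homotopyQ.obj K ≅ X)

lemma hom_zero_of_disjoint (K L : CochainComplex A ℤ)
    (h : ∀ i, IsZero (K.X i) ∨ IsZero (L.X i)) (f : homotopyQ.obj K ⟶ homotopyQ.obj L) :
    f = 0 := by
  obtain ⟨g, rfl⟩ := homotopyQ.map_surjective f
  have : g = 0 := by
    ext i
    rcases h i with h | h
    · exact h.eq_of_src _ _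
    · exact h.eq_of_tgt _ _
  rw [this, Functor.map_zero]

instance (n : ℤ) : (KLE n : ObjectProperty (HomotopyCategory A (ComplexShape.up ℤ))).IsClosedUnderIsomorphisms where
  of_iso e := fun ⟨K, hK, ⟨e'⟩⟩ => ⟨K, hK, ⟨e' ≪≫ e⟩⟩

lemma KLE_shift {n : ℤ} (X : HomotopyCategory A (ComplexShape.up ℤ)) (hX : KLE n X) (m k : ℤ)
    (hk : k + m = n) : KLE k (X⟦m⟧) := by
  obtain ⟨K, hK, ⟨e⟩⟩ := hX
  refine ⟨K⟦m⟧, fun i hi => hK (i + m) (by omega), ⟨?_⟩⟩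
  exact (homotopyQ.commShiftIso m).app K ≪≫ (CategoryTheory.shiftFunctor _ m).mapIso e

lemma KLE_mono {n m : ℤ} (h : n ≤ m) (X : HomotopyCategory A (ComplexShape.up ℤ)) (hX : KLE n X) :
    KLE m X := by
  obtain ⟨K, hK, e⟩ := hX
  exact ⟨K, fun i hi => hK _ (by omega), e⟩

lemma KLE_cone {n : ℤ} (T : Triangle (HomotopyCategory A (ComplexShape.up ℤ)))
    (hT : T ∈ distTriang _) (h1 : KLE (n + 1) T.obj₁) (h2 : KLE n T.obj₂) : KLE n T.obj₃ := by
  obtain ⟨K, hK, ⟨e⟩⟩ := h1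
  obtain ⟨L, hL, ⟨e'⟩⟩ := h2
  obtain ⟨f, hf⟩ := homotopyQ.map_surjective (e.hom ≫ T.mor₁ ≫ e'.inv)
  refine ⟨mappingCone f, fun i hi => ?_, ⟨?_⟩⟩
  · rw [mappingCone.isZero_X_iff]
    exact ⟨hK _ (by omega), hL _ hi⟩
  · exact Triangle.π₃.mapIso (isoTriangleOfIso₁₂ _ _
      (HomotopyCategory.mappingCone_triangleh_distinguished f) hT e e'
      (by change homotopyQ.map f ≫ e'.hom = _; rw [hf]; simp; rfl))

lemma KLE_ext {n : ℤ} (T : Triangle (HomotopyCategory A (ComplexShape.up ℤ)))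
    (hT : T ∈ distTriang _) (h1 : KLE n T.obj₁) (h3 : KLE n T.obj₃) : KLE n T.obj₂ :=
  KLE_cone _ (inv_rot_of_distTriang _ hT) (KLE_shift _ h3 _ _ (by omega)) h1

/-- left orthogonal -/
def KGE (n : ℤ) : ObjectProperty (HomotopyCategory A (ComplexShape.up ℤ)) := fun X =>
  ∀ Y, KLE (n - 1) Y → ∀ f : X ⟶ Y, f = 0

lemma KGE_ext {n : ℤ} (T : Triangle (HomotopyCategory A (ComplexShape.up ℤ)))
    (hT : T ∈ distTriang _) (h1 : KGE n T.obj₁) (h3 : KGE n T.obj₃) : KGE n T.obj₂ := by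
  intro Y hY f
  obtain ⟨g, hg⟩ := Triangle.yoneda_exact₂ T hT f (h1 Y hY _)
  rw [hg, h3 Y hY g, comp_zero]

lemma KGE_shift {n : ℤ} (X : HomotopyCategory A (ComplexShape.up ℤ)) (hX : KGE n X) (m k : ℤ)
    (hk : k + m = n) : KGE k (X⟦m⟧) := by
  intro Y hY f
  apply (CategoryTheory.shiftFunctor _ (-m)).map_injective
  rw [Functor.map_zero, ← cancel_epi (shiftShiftNeg X m).inv, comp_zero]
  exact hX _ (KLE_shift _ hY (-m) _ (by omega)) _

lemma KGE_of_complex {n : ℤ} (K : CochainComplex A ℤ) (hK : ∀ i, i < n → IsZero (K.X i)) :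
    KGE n (homotopyQ.obj K) := by
  rintro Y ⟨L, hL, ⟨e⟩⟩ f
  rw [← cancel_mono e.inv, zero_comp]
  refine hom_zero_of_disjoint _ _ (fun i => ?_) _
  by_cases h : i < n
  · exact Or.inl (hK _ h)
  · exact Or.inr (hL _ (by omega))

end PartOne

section PartTwo

variable {A : Type u} [Category.{v} A] [Preadditive A] [HasZeroObject A] [HasFiniteBiproducts A]
  (S : MorphismProperty A)

instance genSubcat_closedIso (B : Set (HomotopyCategory A (ComplexShape.up ℤ))) :
    (genSubcat B).IsClosedUnderIsomorphisms :=
  inferInstanceAs (ObjectProperty.isoClosure (genSub B)).IsClosedUnderIsomorphisms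

/-- compatibility of the embedding with functors -/
noncomputable def iotaIso {A' : Type u'} [Category.{v'} A'] [Preadditive A'] [HasZeroObject A']
    (F : A ⥤ A') [F.Additive] :
    (iotaA : A ⥤ _) ⋙ F.mapHomotopyCategory (ComplexShape.up ℤ) ≅
      F ⋙ (HomologicalComplex.single A' (ComplexShape.up ℤ) 0 ⋙
        HomotopyCategory.quotient A' (ComplexShape.up ℤ)) :=
  Functor.associator _ _ _ ≪≫
    Functor.isoWhiskerLeft (HomologicalComplex.single A (ComplexShape.up ℤ) 0)
    (F.mapHomotopyCategoryFactors (ComplexShape.up ℤ)) ≪≫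
    (Functor.associator _ _ _).symm ≪≫
    Functor.isoWhiskerRight (HomologicalComplex.singleMapHomologicalComplex F (ComplexShape.up ℤ) 0)
      (HomotopyCategory.quotient A' (ComplexShape.up ℤ)) ≪≫ Functor.associator _ _ _

lemma isZero_map_of_genSub {A' : Type u'} [Category.{v'} A'] [Preadditive A'] [HasZeroObject A']
    [HasFiniteBiproducts A'] (F : A ⥤ A') [F.Additive]
    (hF : ∀ ⦃X Y : A⦄ (s : X ⟶ Y), S s → IsIso (F.map s))
    (D : HomotopyCategory A (ComplexShape.up ℤ)) (hD : genSub (coneSet S) D) :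
    IsZero ((F.mapHomotopyCategory (ComplexShape.up ℤ)).obj D) := by
  induction hD with
  | of X hX =>
    obtain ⟨P, Q, s, hs, rfl⟩ := hX
    obtain ⟨g, h, hT⟩ := cone_triangle s
    have hT' := (F.mapHomotopyCategory (ComplexShape.up ℤ)).map_distinguished _ hT
    refine Triangle.isZero₃_of_isIso₁ _ hT' ?_
    have := hF s hs
    refine (NatIso.isIso_map_iff (iotaIso F) s).2 ?_
    change IsIso ((HomologicalComplex.single A' (ComplexShape.up ℤ) 0 ⋙
        HomotopyCategory.quotient A' (ComplexShape.up ℤ)).map (F.map s))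
    infer_instance
  | zero X hX => exact Functor.map_isZero _ hX
  | shift X n _ ih =>
    exact ((shiftFunctor _ n).map_isZero ih).of_iso
      (((F.mapHomotopyCategory (ComplexShape.up ℤ)).commShiftIso n).app X)
  | ext₂ T hT _ _ h1 h3 =>
    have hT' := (F.mapHomotopyCategory (ComplexShape.up ℤ)).map_distinguished _ hT
    exact Triangle.isZero₂_of_isZero₁₃ _ hT' h1 h3

lemma isZero_map_of_genSubcat {A' : Type u'} [Category.{v'} A'] [Preadditive A'] [HasZeroObject A']
    [HasFiniteBiproducts A'] (F : A ⥤ A') [F.Additive]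
    (hF : ∀ ⦃X Y : A⦄ (s : X ⟶ Y), S s → IsIso (F.map s))
    (D : HomotopyCategory A (ComplexShape.up ℤ)) (hD : genSubcat (coneSet S) D) :
    IsZero ((F.mapHomotopyCategory (ComplexShape.up ℤ)).obj D) := by
  obtain ⟨D', hD', ⟨e⟩⟩ := hD
  exact (isZero_map_of_genSub S F hF D' hD').of_iso
    ((F.mapHomotopyCategory (ComplexShape.up ℤ)).mapIso e)

lemma isInverted {A' : Type u'} [Category.{v'} A'] [Preadditive A'] [HasZeroObject A']
    [HasFiniteBiproducts A'] (F : A ⥤ A') [F.Additive]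
    (hF : ∀ ⦃X Y : A⦄ (s : X ⟶ Y), S s → IsIso (F.map s)) :
    (genSubcat (coneSet S)).trW.IsInvertedBy (F.mapHomotopyCategory (ComplexShape.up ℤ)) := by
  rintro X Y f ⟨Z, g, h, hT, hZ⟩
  have hT' := (F.mapHomotopyCategory (ComplexShape.up ℤ)).map_distinguished _ hT
  exact (Triangle.isZero₃_iff_isIso₁ _ hT').1 (isZero_map_of_genSubcat S F hF Z hZ)

lemma isIso_uBig_map {X Y : A} (s : X ⟶ Y) (hs : S s) : IsIso ((uBig S).map s) := by
  obtain ⟨g, h, hT⟩ := cone_triangle s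
  exact Localization.inverts (locQ S) (genSubcat (coneSet S)).trW _
    ⟨_, g, h, hT, ObjectProperty.le_isoClosure _ _ (genSub.of _ ⟨_, _, s, hs, rfl⟩)⟩

/-- the pieces -/
def KR (n : ℤ) : ObjectProperty (HomotopyCategory A (ComplexShape.up ℤ)) := fun X =>
  genSubcat (coneSet S) X ∧ KLE n X

lemma KLE_of_isZero (n : ℤ) (X : HomotopyCategory A (ComplexShape.up ℤ)) (h : IsZero X) :
    KLE n X :=
  ⟨0, fun i _ => (HomologicalComplex.eval A (ComplexShape.up ℤ) i).map_isZero (isZero_zero _),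
    ⟨(homotopyQ.map_isZero (isZero_zero _)).iso h⟩⟩

lemma swap_le (n : ℤ) : (KR S n).extensionProduct (KGE n) ≤ (KGE n).extensionProduct (KR S n) := by
  rintro E ⟨R, P, f, g, h, hT, hR, hP⟩
  have h0 : h = 0 := hP _ (KLE_shift _ hR.2 1 _ (by omega)) h
  obtain ⟨e, -, -⟩ := exists_iso_binaryBiproduct_of_distTriang _ hT h0
  let e' : E ≅ P ⊞ R := e ≪≫ biprod.braiding _ _
  refine ((KGE n).extensionProduct (KR S n)).prop_of_iso e'.symm ?_
  exact ⟨_, _, _, _, _, binaryBiproductTriangle_distinguished P R, hP, hR⟩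

lemma dec_ext (n : ℤ) :
    ((KGE n).extensionProduct (KR S n)).extensionProduct ((KGE n).extensionProduct (KR S n)) ≤
      (KGE n).extensionProduct (KR S n) := by
  have hP : (KGE n : ObjectProperty (HomotopyCategory A (ComplexShape.up ℤ))).extensionProduct
      (KGE n) ≤ KGE n := by
    rintro E ⟨R, P, f, g, h, hT, h1, h3⟩
    exact KGE_ext _ hT h1 h3
  have hR : (KR S n).extensionProduct (KR S n) ≤ KR S n := by
    rintro E ⟨R, P, f, g, h, hT, h1, h3⟩
    exact ⟨(genSubcat (coneSet S)).ext_of_isTriangulatedClosed₂ _ hT h1.1 h3.1,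
      KLE_ext _ hT h1.2 h3.2⟩
  rw [ObjectProperty.extensionProduct_assoc, ← ObjectProperty.extensionProduct_assoc (KR S n)]
  refine (ObjectProperty.monotone_extensionProduct_right _
    (ObjectProperty.monotone_extensionProduct_left _ (swap_le S n))).trans ?_
  rw [ObjectProperty.extensionProduct_assoc, ← ObjectProperty.extensionProduct_assoc (KGE n)]
  exact (ObjectProperty.monotone_extensionProduct_left _ hP).trans
    (ObjectProperty.monotone_extensionProduct_right _ hR)

lemma dec_of_KGE (n : ℤ) (X : HomotopyCategory A (ComplexShape.up ℤ)) (h : KGE n X) :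
    (KGE n).extensionProduct (KR S n) X :=
  ⟨X, 0, _, _, _, contractible_distinguished X, h,
    ObjectProperty.le_isoClosure _ _ (genSub.zero _ (isZero_zero _)),
    KLE_of_isZero _ _ (isZero_zero _)⟩

lemma dec_of_KR (n : ℤ) (X : HomotopyCategory A (ComplexShape.up ℤ)) (h : KR S n X) :
    (KGE n).extensionProduct (KR S n) X :=
  ⟨0, X, _, _, _, contractible_distinguished₁ X,
    fun _ _ _ => (isZero_zero _).eq_of_src _ _, h⟩

lemma dec_genSub (D : HomotopyCategory A (ComplexShape.up ℤ)) (hD : genSub (coneSet S) D) :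
    ∀ n, (KGE n).extensionProduct (KR S n) D := by
  induction hD with
  | of X hX =>
    intro n
    have hX' := hX
    obtain ⟨P, Q, s, hs, rfl⟩ := hX
    by_cases hn : n < 0
    · exact dec_of_KGE _ _ _ (KGE_of_complex _
        (fun i hi => twoComplex_isZero _ _ _ (by omega) (by omega)))
    · exact dec_of_KR _ _ _ ⟨ObjectProperty.le_isoClosure _ _ (genSub.of _ hX'),
        _, fun i hi => twoComplex_isZero _ _ _ (by omega) (by omega), ⟨Iso.refl _⟩⟩
  | zero X hX =>
    intro n
    exact dec_of_KGE _ _ _ (fun _ _ _ => hX.eq_of_src _ _)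
  | shift X m _ ih =>
    intro n
    obtain ⟨Y, Z, f, g, h, hT, hY, hZ⟩ := ih (n + m)
    exact ⟨_, _, _, _, _, Triangle.shift_distinguished _ hT m, KGE_shift _ hY _ _ rfl,
      (genSubcat (coneSet S)).le_shift m _ hZ.1, KLE_shift _ hZ.2 _ _ rfl⟩
  | ext₂ T hT _ _ h1 h3 =>
    intro n
    exact dec_ext S n _ ⟨_, _, _, _, _, hT, h1 n, h3 n⟩

lemma dec_genSubcat (D : HomotopyCategory A (ComplexShape.up ℤ)) (hD : genSubcat (coneSet S) D)
    (n : ℤ) : (KGE n).extensionProduct (KR S n) D := by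
  obtain ⟨D', hD', ⟨e⟩⟩ := hD
  exact ((KGE n).extensionProduct (KR S n)).prop_of_iso e.symm (dec_genSub S D' hD' n)

end PartTwo

section PartThree

variable {A : Type u} [Category.{v} A] [Preadditive A] [HasZeroObject A] [HasFiniteBiproducts A]

lemma exists_splitting {A' : Type u'} [Category.{v'} A'] [Preadditive A'] [HasZeroObject A']
    [HasFiniteBiproducts A'] (F : A ⥤ A') [F.Additive] (K : CochainComplex A ℤ)
    (hK : IsZero (K.X 1))
    (hz : IsZero ((F.mapHomotopyCategory (ComplexShape.up ℤ)).obj (homotopyQ.obj K))) :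
    ∃ h : F.obj (K.X 0) ⟶ F.obj (K.X (-1)), h ≫ F.map (K.d (-1) 0) = 𝟙 _ := by
  have hz' : IsZero ((HomotopyCategory.quotient A' (ComplexShape.up ℤ)).obj
      ((F.mapHomologicalComplex (ComplexShape.up ℤ)).obj K)) :=
    hz.of_iso ((F.mapHomotopyCategoryFactors (ComplexShape.up ℤ)).symm.app K)
  rw [HomotopyCategory.isZero_quotient_obj_iff] at hz'
  obtain ⟨H⟩ := hz'
  have := H.comm 0
  rw [dNext_eq (i := 0) (i' := 1) _ (by simp), prevD_eq (j := 0) (j' := -1) _ (by simp)] at this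
  refine ⟨H.hom 0 (-1), ?_⟩
  have h1 : F.map (K.d 0 1) = 0 := by rw [hK.eq_of_tgt (K.d 0 1) 0, F.map_zero]
  have h2 : ((F.mapHomologicalComplex (ComplexShape.up ℤ)).obj K).d 0 1 = 0 := h1
  rw [h2, zero_comp, zero_add, HomologicalComplex.zero_f, add_zero] at this
  exact this.symm

/-- a family of subgroups of morphisms closed under the operations -/
structure GoodFam (S : MorphismProperty A) where
  /-- the subgroups -/
  W : ∀ X Y : A, AddSubgroup ((uBig S).obj X ⟶ (uBig S).obj Y)
  map_mem : ∀ {X Y : A} (f : X ⟶ Y), (uBig S).map f ∈ W X Y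
  comp_mem : ∀ {X Y Z : A} (f : (uBig S).obj X ⟶ (uBig S).obj Y)
    (g : (uBig S).obj Y ⟶ (uBig S).obj Z), f ∈ W X Y → g ∈ W Y Z → f ≫ g ∈ W X Z
  inv_mem : ∀ {X Y : A} (s : X ⟶ Y) (_ : S s) (t : (uBig S).obj Y ⟶ (uBig S).obj X),
    (uBig S).map s ≫ t = 𝟙 _ → t ≫ (uBig S).map s = 𝟙 _ → t ∈ W Y X

variable {S : MorphismProperty A}

lemma GoodFam.id_mem (G : GoodFam S) (X : A) : 𝟙 ((uBig S).obj X) ∈ G.W X X := by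
  rw [← (uBig S).map_id]; exact G.map_mem _

/-- the wide subcategory -/
def WCat (_ : GoodFam S) : Type u := A

noncomputable instance (G : GoodFam S) : Category (WCat G) where
  Hom X Y := G.W X Y
  id X := ⟨𝟙 _, G.id_mem X⟩
  comp f g := ⟨f.1 ≫ g.1, G.comp_mem _ _ f.2 g.2⟩
  id_comp f := Subtype.ext (Category.id_comp f.1)
  comp_id f := Subtype.ext (Category.comp_id f.1)
  assoc f g h := Subtype.ext (Category.assoc f.1 g.1 h.1)

noncomputable instance (G : GoodFam S) : Preadditive (WCat G) where
  homGroup X Y := inferInstanceAs (AddCommGroup (G.W X Y))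
  add_comp _ _ _ f f' g := Subtype.ext (Preadditive.add_comp _ _ _ f.1 f'.1 g.1)
  comp_add _ _ _ f g g' := Subtype.ext (Preadditive.comp_add _ _ _ f.1 g.1 g'.1)

/-- the functor to the wide subcategory -/
noncomputable def WFun (G : GoodFam S) : A ⥤ WCat G where
  obj X := X
  map f := ⟨(uBig S).map f, G.map_mem f⟩
  map_id X := Subtype.ext ((uBig S).map_id X)
  map_comp f g := Subtype.ext ((uBig S).map_comp f g)

instance (G : GoodFam S) : (WFun G).Additive where
  map_add {_ _ f g} := Subtype.ext ((uBig S).map_add (f := f) (g := g))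

instance (G : GoodFam S) : HasZeroObject (WCat G) :=
  ((WFun G).map_isZero (isZero_zero A)).hasZeroObject

instance (G : GoodFam S) : HasBinaryBiproducts (WCat G) where
  has_binary_biproduct X Y := by
    let X' : A := X
    let Y' : A := Y
    change HasBinaryBiproduct ((WFun G).obj X') ((WFun G).obj Y')
    refine hasBinaryBiproduct_of_total
      ((WFun G).mapBinaryBicone (BinaryBiproduct.bicone X' Y')) ?_
    have : (WFun G).map biprod.fst ≫ (WFun G).map biprod.inl +
        (WFun G).map biprod.snd ≫ (WFun G).map biprod.inr = 𝟙 ((WFun G).obj (X' ⊞ Y')) := by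
      rw [← Functor.map_comp, ← Functor.map_comp, ← Functor.map_add, biprod.total,
        CategoryTheory.Functor.map_id]
    exact this

instance (G : GoodFam S) : HasFiniteBiproducts (WCat G) :=
  have : HasFiniteProducts (WCat G) := hasFiniteProducts_of_has_binary_and_terminal
  HasFiniteBiproducts.of_hasFiniteProducts

lemma WFun_inverts (G : GoodFam S) ⦃X Y : A⦄ (s : X ⟶ Y) (hs : S s) : IsIso ((WFun G).map s) := by
  obtain ⟨t, h1, h2⟩ := isIso_uBig_map S s hs
  exact ⟨⟨t, G.inv_mem s hs t h1 h2⟩, Subtype.ext h1, Subtype.ext h2⟩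

lemma exists_h (G : GoodFam S) (K : CochainComplex A ℤ)
    (hK : IsZero (K.X 1)) (hz : genSubcat (coneSet S) (homotopyQ.obj K)) :
    ∃ h ∈ G.W (K.X 0) (K.X (-1)), h ≫ (uBig S).map (K.d (-1) 0) = 𝟙 _ := by
  obtain ⟨h, hh⟩ := exists_splitting (WFun G) K hK
    (isZero_map_of_genSubcat S (WFun G) (WFun_inverts G) _ hz)
  exact ⟨h.1, h.2, congrArg Subtype.val hh⟩

end PartThree

section PartFour

variable {A : Type u} [Category.{v} A] [Preadditive A] [HasZeroObject A] [HasFiniteBiproducts A]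

lemma exists_j (K : CochainComplex A ℤ) (hK : IsZero (K.X 1)) :
    ∃ j : (iotaA : A ⥤ _).obj (K.X 0) ⟶ homotopyQ.obj K,
      (∀ (X : A) (φ : (iotaA : A ⥤ _).obj X ⟶ homotopyQ.obj K), ∃ g : X ⟶ K.X 0,
        φ = iotaA.map g ≫ j) ∧ iotaA.map (K.d (-1) 0) ≫ j = 0 := by
  let j₀ : (HomologicalComplex.single A (ComplexShape.up ℤ) 0).obj (K.X 0) ⟶ K :=
    HomologicalComplex.mkHomFromSingle (𝟙 _) (fun k hk => by
      obtain rfl : 0 + 1 = k := hk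
      exact hK.eq_of_tgt _ _)
  have hj₀ : j₀.f 0 = (HomologicalComplex.singleObjXSelf (ComplexShape.up ℤ) 0 (K.X 0)).hom := by
    rw [HomologicalComplex.mkHomFromSingle_f, Category.comp_id]
  refine ⟨homotopyQ.map j₀, ?_, ?_⟩
  · intro X φ
    obtain ⟨ψ, rfl⟩ := homotopyQ.map_surjective φ
    refine ⟨(HomologicalComplex.singleObjXSelf (ComplexShape.up ℤ) 0 X).inv ≫ ψ.f 0, ?_⟩
    change _ = homotopyQ.map _ ≫ _
    rw [← homotopyQ.map_comp]
    congr 1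
    apply HomologicalComplex.from_single_hom_ext
    rw [HomologicalComplex.comp_f, HomologicalComplex.single_map_f_self, hj₀]
    simp
  · change homotopyQ.map _ ≫ _ = 0
    rw [← homotopyQ.map_comp]
    let h : ∀ (i j : ℤ), (ComplexShape.up ℤ).Rel j i →
        (((HomologicalComplex.single A (ComplexShape.up ℤ) 0).obj (K.X (-1))).X i ⟶ K.X j) :=
      fun i j hij => if hi : i = 0 then
        (HomologicalComplex.singleObjXIsoOfEq (ComplexShape.up ℤ) 0 (K.X (-1)) i hi).hom ≫
          (K.XIsoOfEq (show -1 = j by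
            have : j + 1 = i := hij
            omega)).hom else 0
    have : (HomologicalComplex.single A (ComplexShape.up ℤ) 0).map (K.d (-1) 0) ≫ j₀ =
        Homotopy.nullHomotopicMap' h := by
      apply HomologicalComplex.from_single_hom_ext
      rw [HomologicalComplex.comp_f, HomologicalComplex.single_map_f_self, hj₀,
        Homotopy.nullHomotopicMap'_f (k₀ := 1) (k₁ := 0) (k₂ := -1) (by simp) (by simp)]
      have h1 : h 0 (-1) (by simp) =
        (HomologicalComplex.singleObjXSelf (ComplexShape.up ℤ) 0 (K.X (-1))).hom := by
        dsimp only [h]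
        rw [dif_pos rfl]
        exact Category.comp_id _
      rw [h1]
      simp
    rw [this, HomotopyCategory.eq_of_homotopy _ _ (Homotopy.nullHomotopy' h), Functor.map_zero]

variable {S : MorphismProperty A}

lemma exact2 {X Y Z T : HomotopyCategory A (ComplexShape.up ℤ)} {f : X ⟶ Y} {g : Y ⟶ Z}
    {h : Z ⟶ X⟦(1 : ℤ)⟧} (hT : Triangle.mk f g h ∈ distTriang _) (a : T ⟶ Y) (ha : a ≫ g = 0) :
    ∃ b : T ⟶ X, a = b ≫ f := Triangle.coyoneda_exact₂ _ hT a ha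

lemma exact3 {X Y Z T : HomotopyCategory A (ComplexShape.up ℤ)} {f : X ⟶ Y} {g : Y ⟶ Z}
    {h : Z ⟶ X⟦(1 : ℤ)⟧} (hT : Triangle.mk f g h ∈ distTriang _) (a : T ⟶ Z) (ha : a ≫ h = 0) :
    ∃ b : T ⟶ Y, a = b ≫ g := Triangle.coyoneda_exact₃ _ hT a ha

lemma yexact2 {X Y Z T : HomotopyCategory A (ComplexShape.up ℤ)} {f : X ⟶ Y} {g : Y ⟶ Z}
    {h : Z ⟶ X⟦(1 : ℤ)⟧} (hT : Triangle.mk f g h ∈ distTriang _) (a : Y ⟶ T) (ha : f ≫ a = 0) :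
    ∃ b : Z ⟶ T, a = g ≫ b := Triangle.yoneda_exact₂ _ hT a ha

/-- replacing the denominator by one with cone in nonpositive degrees -/
lemma exists_good_denominator {Y : A} {Z : HomotopyCategory A (ComplexShape.up ℤ)}
    (s : (iotaA : A ⥤ _).obj Y ⟶ Z) (hs : (genSubcat (coneSet S)).trW s) :
    ∃ (K : CochainComplex A ℤ) (_ : ∀ i, 0 < i → IsZero (K.X i))
      (_ : genSubcat (coneSet S) (homotopyQ.obj K))
      (Z' : HomotopyCategory A (ComplexShape.up ℤ)) (t : Z ⟶ Z')
      (p : Z' ⟶ homotopyQ.obj K) (δ : homotopyQ.obj K ⟶ ((iotaA : A ⥤ _).obj Y)⟦(1 : ℤ)⟧),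
      Triangle.mk (s ≫ t) p δ ∈ distTriang (HomotopyCategory A (ComplexShape.up ℤ)) := by
  obtain ⟨D, g, h, hT, hD⟩ := hs
  obtain ⟨D', D'', a, b, c, hT', hD', hD'', K, hK, ⟨e⟩⟩ := dec_genSubcat S D hD 0
  have hY : KLE (-1) (((iotaA : A ⥤ _).obj Y)⟦(1 : ℤ)⟧) :=
    KLE_shift (n := 0) _ ⟨_, fun i hi => HomologicalComplex.isZero_single_obj_X _ _ _ _
      (by omega), ⟨Iso.refl _⟩⟩ 1 _ (by omega)
  obtain ⟨δ, hδ⟩ := yexact2 hT' h (hD' _ hY _)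
  obtain ⟨Z', f', p', hT''⟩ := distinguished_cocone_triangle₂ (e.hom ≫ δ)
  obtain ⟨t, ht, -⟩ := complete_distinguished_triangle_morphism₂ _ _ hT hT'' (𝟙 _) (b ≫ e.inv) (by
    change h ≫ _ = (b ≫ e.inv) ≫ e.hom ≫ δ
    rw [Category.assoc, e.inv_hom_id_assoc, ← hδ]
    refine (congrArg (fun k => h ≫ k) (CategoryTheory.Functor.map_id _ _)).trans ?_
    exact Category.comp_id h)
  have ht' : s ≫ t = f' := ht.trans (Category.id_comp _)
  exact ⟨K, hK, (genSubcat (coneSet S)).prop_of_iso e.symm hD'', Z', t, p', _, ht' ▸ hT''⟩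

theorem generation (G : GoodFam S) {X Y : A} (α : (uBig S).obj X ⟶ (uBig S).obj Y) :
    α ∈ G.W X Y := by
  obtain ⟨φ, hφ⟩ := Localization.exists_leftFraction (locQ S) (genSubcat (coneSet S)).trW α
  obtain ⟨K, hK, hD, Z, t, p, δ, hT⟩ := exists_good_denominator φ.s φ.hs
  have hα : α ≫ (locQ S).map (φ.s ≫ t) = (locQ S).map (φ.f ≫ t) := by
    rw [hφ, Functor.map_comp, Functor.map_comp,
      MorphismProperty.LeftFraction.map_comp_map_s_assoc]
  have hiso : IsIso ((locQ S).map (φ.s ≫ t)) :=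
    Localization.inverts (locQ S) (genSubcat (coneSet S)).trW _ ⟨_, p, δ, hT, hD⟩
  generalize φ.s ≫ t = s at *
  generalize φ.f ≫ t = z at *
  clear hφ
  obtain ⟨j, hj1, hj2⟩ := exists_j K (hK 1 (by omega))
  have hY : KLE (-1) (((iotaA : A ⥤ _).obj Y)⟦(1 : ℤ)⟧) :=
    KLE_shift (n := 0) _ ⟨_, fun i hi => HomologicalComplex.isZero_single_obj_X _ _ _ _
      (by omega), ⟨Iso.refl _⟩⟩ 1 _ (by omega)
  have hjδ : j ≫ δ = 0 := KGE_of_complex (n := 0) _ (fun i hi =>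
    HomologicalComplex.isZero_single_obj_X _ _ _ _ (by omega)) _ hY _
  obtain ⟨j', hj' : j = j' ≫ p⟩ := exact3 hT j hjδ
  obtain ⟨g, hg⟩ := hj1 _ (z ≫ p)
  obtain ⟨f, hf⟩ := exact2 hT (z - iotaA.map g ≫ j') (by
    rw [Preadditive.sub_comp, Category.assoc, ← hj', hg, sub_self])
  obtain ⟨e, he⟩ := exact2 hT (iotaA.map (K.d (-1) 0) ≫ j') (by
    rw [Category.assoc, ← hj', hj2])
  obtain ⟨f, rfl⟩ := (iotaA : A ⥤ _).map_surjective f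
  obtain ⟨e, rfl⟩ := (iotaA : A ⥤ _).map_surjective e
  obtain ⟨h, hW, hh⟩ := exists_h G K (hK 1 (by omega)) hD
  have he' : (uBig S).map (K.d (-1) 0) ≫ (locQ S).map j' = (uBig S).map e ≫ (locQ S).map s := by
    have := congrArg (locQ S).map he
    rw [Functor.map_comp, Functor.map_comp] at this
    exact this
  have hz : (locQ S).map z = (uBig S).map f ≫ (locQ S).map s + (uBig S).map g ≫ (locQ S).map j' := by
    rw [sub_eq_iff_eq_add] at hf
    have := congrArg (locQ S).map hf
    rw [Functor.map_add, Functor.map_comp, Functor.map_comp] at this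
    exact this
  have hj : (locQ S).map j' = h ≫ (uBig S).map e ≫ (locQ S).map s := by
    rw [← he', ← Category.assoc, hh]
    exact (Category.id_comp _).symm
  have : α = (uBig S).map f + (uBig S).map g ≫ h ≫ (uBig S).map e := by
    rw [← cancel_mono ((locQ S).map s), hα, hz, hj, Preadditive.add_comp]
    simp only [Category.assoc]
  rw [this]
  exact (G.W X Y).add_mem (G.map_mem _) (G.comp_mem _ _ (G.map_mem _) (G.comp_mem _ _ hW (G.map_mem _)))

end PartFour

section PartFive

instance iota_faithful {A : Type u} [Category.{v} A] [Preadditive A] [HasZeroObject A] :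
    (HomologicalComplex.single A (ComplexShape.up ℤ) 0 ⋙
        HomotopyCategory.quotient A (ComplexShape.up ℤ)).Faithful where
  map_injective {X Y f g} hfg := by
    let H := HomotopyCategory.homotopyOfEq _ _ hfg
    have := H.comm 0
    rw [dNext_eq (i := 0) (i' := 1) _ (by simp), prevD_eq (j := 0) (j' := -1) _ (by simp),
      HomologicalComplex.single_obj_d, HomologicalComplex.single_obj_d, zero_comp, comp_zero,
      zero_add, zero_add] at this
    apply (HomologicalComplex.single A (ComplexShape.up ℤ) 0).map_injective
    exact HomologicalComplex.from_single_hom_ext this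

variable {A : Type u} [Category.{v} A] [Preadditive A] [HasZeroObject A] [HasFiniteBiproducts A]
  (S : MorphismProperty A)

lemma existence {A' : Type u'} [Category.{v'} A'] [Preadditive A'] [HasFiniteBiproducts A']
    (F : A ⥤ A') [F.Additive] (hF : ∀ ⦃X Y : A⦄ (s : X ⟶ Y), S s → IsIso (F.map s)) :
    ∃ G : AddLoc S ⥤ A', G.Additive ∧ uFun S ⋙ G = F := by
  have : HasZeroObject A' := hasZeroObject_of_hasFiniteBiproducts _
  let Φ := F.mapHomotopyCategory (ComplexShape.up ℤ)
  let W := (genSubcat (coneSet S)).trW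
  let L := Localization.lift Φ (isInverted S F hF) W.Q
  let fac : W.Q ⋙ L ≅ Φ := Localization.fac Φ (isInverted S F hF) W.Q
  let I' := HomologicalComplex.single A' (ComplexShape.up ℤ) 0 ⋙
        HomotopyCategory.quotient A' (ComplexShape.up ℤ)
  have hL : L.Additive := by
    rw [Localization.functor_additive_iff W.Q W]
    exact Functor.additive_of_iso fac.symm
  have : I'.Faithful := iota_faithful
  have : I'.Full := inferInstanceAs (HomologicalComplex.single A' (ComplexShape.up ℤ) 0 ⋙
        HomotopyCategory.quotient A' (ComplexShape.up ℤ)).Full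
  have : I'.Additive := inferInstanceAs (HomologicalComplex.single A' (ComplexShape.up ℤ) 0 ⋙
        HomotopyCategory.quotient A' (ComplexShape.up ℤ)).Additive
  let β : uBig S ⋙ L ≅ F ⋙ I' :=
    Functor.associator _ _ _ ≪≫ Functor.isoWhiskerLeft iotaA fac ≪≫ iotaIso F
  let m : ∀ {X Y : A}, ((uBig S).obj X ⟶ (uBig S).obj Y) → (F.obj X ⟶ F.obj Y) := fun {X Y} α =>
    I'.preimage (β.inv.app X ≫ L.map α ≫ β.hom.app Y)
  have hm : ∀ {X Y : A} (α : (uBig S).obj X ⟶ (uBig S).obj Y),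
      I'.map (m α) = β.inv.app X ≫ L.map α ≫ β.hom.app Y := fun α => I'.map_preimage _
  have m_map : ∀ {X Y : A} (f : X ⟶ Y), m ((uBig S).map f) = F.map f := fun {X Y} f => by
    apply I'.map_injective
    rw [hm]
    have := β.hom.naturality f
    change L.map _ ≫ _ = _ ≫ I'.map (F.map f) at this
    rw [this]
    exact β.inv_hom_id_app_assoc _ _
  have m_id : ∀ X : A, m (𝟙 ((uBig S).obj X)) = 𝟙 (F.obj X) := fun X => by
    rw [← (uBig S).map_id, m_map, F.map_id]
  have m_comp : ∀ {X Y Z : A} (f : (uBig S).obj X ⟶ (uBig S).obj Y)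
      (g : (uBig S).obj Y ⟶ (uBig S).obj Z), m (f ≫ g) = m f ≫ m g := fun {X Y Z} f g => by
    apply I'.map_injective
    rw [I'.map_comp, hm, hm, hm, L.map_comp]
    simp only [Category.assoc]
    erw [β.hom_inv_id_app_assoc]
  have m_add : ∀ {X Y : A} (f g : (uBig S).obj X ⟶ (uBig S).obj Y), m (f + g) = m f + m g :=
    fun {X Y} f g => by
    apply I'.map_injective
    rw [I'.map_add, hm, hm, hm, L.map_add, Preadditive.add_comp, Preadditive.comp_add]
  let G : AddLoc S ⥤ A' :=
    { obj := fun X => F.obj X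
      map := fun {X Y} α => m (X := X) (Y := Y) α
      map_id := fun X => m_id X
      map_comp := fun {X Y Z} f g => m_comp (X := X) (Y := Y) (Z := Z) f g }
  refine ⟨G, ⟨fun {X Y f g} => m_add (X := X) (Y := Y) f g⟩, ?_⟩
  refine CategoryTheory.Functor.ext (fun X => rfl) (fun X Y f => ?_)
  have h3 : F.map f = 𝟙 (F.obj X) ≫ F.map f ≫ 𝟙 (F.obj Y) := by
    rw [Category.id_comp, Category.comp_id]
  exact (m_map f).trans h3

lemma isIso_uFun_map {X Y : A} (s : X ⟶ Y) (hs : S s) : IsIso ((uFun S).map s) := by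
  obtain ⟨t, h1, h2⟩ := isIso_uBig_map S s hs
  exact ⟨t, h1, h2⟩

lemma uniqueness {A' : Type u'} [Category.{v'} A'] [Preadditive A']
    (G₁ G₂ : AddLoc S ⥤ A') [G₁.Additive] [G₂.Additive] (h : uFun S ⋙ G₁ = uFun S ⋙ G₂) :
    G₁ = G₂ := by
  have ho : ∀ X : AddLoc S, G₁.obj X = G₂.obj X := fun X => Functor.congr_obj h X
  let P : ∀ {X Y : AddLoc S}, (X ⟶ Y) → Prop := fun {X Y} α =>
    G₁.map α = eqToHom (ho X) ≫ G₂.map α ≫ eqToHom (ho Y).symm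
  have P_map : ∀ {X Y : A} (f : X ⟶ Y), P ((uFun S).map f) := fun f => Functor.congr_hom h f
  have P_comp : ∀ {X Y Z : AddLoc S} (f : X ⟶ Y) (g : Y ⟶ Z), P f → P g → P (f ≫ g) := by
    intro X Y Z f g hf hg
    dsimp only [P] at hf hg ⊢
    rw [G₁.map_comp, G₂.map_comp, hf, hg]
    simp
  have P_zero : ∀ X Y : AddLoc S, P (0 : X ⟶ Y) := by
    intro X Y
    dsimp only [P]
    simp
  have P_add : ∀ {X Y : AddLoc S} (f g : X ⟶ Y), P f → P g → P (f + g) := by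
    intro X Y f g hf hg
    dsimp only [P] at hf hg ⊢
    rw [G₁.map_add, G₂.map_add, hf, hg, Preadditive.add_comp, Preadditive.comp_add]
  have P_neg : ∀ {X Y : AddLoc S} (f : X ⟶ Y), P f → P (-f) := by
    intro X Y f hf
    dsimp only [P] at hf ⊢
    rw [G₁.map_neg, G₂.map_neg, hf, Preadditive.neg_comp, Preadditive.comp_neg]
  have P_inv : ∀ {X Y : AddLoc S} (s : X ⟶ Y) (t : Y ⟶ X), P s → s ≫ t = 𝟙 _ → t ≫ s = 𝟙 _ →
      P t := by
    intro X Y s t hs h1 h2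
    dsimp only [P] at hs ⊢
    have e1 : G₁.map t ≫ G₁.map s = 𝟙 _ := by rw [← G₁.map_comp, h2, G₁.map_id]
    have e2 : G₂.map s ≫ G₂.map t = 𝟙 _ := by rw [← G₂.map_comp, h1, G₂.map_id]
    have e3 : G₁.map s ≫ eqToHom (ho Y) ≫ G₂.map t ≫ eqToHom (ho X).symm = 𝟙 _ := by
      rw [hs]
      simp [reassoc_of% e2]
    calc G₁.map t = G₁.map t ≫ G₁.map s ≫ eqToHom (ho Y) ≫ G₂.map t ≫ eqToHom (ho X).symm := by
          rw [e3, Category.comp_id]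
      _ = _ := by rw [reassoc_of% e1]
  let Fam : GoodFam S :=
    { W := fun X Y =>
        { carrier := {α | P (X := X) (Y := Y) α}
          zero_mem' := P_zero X Y
          add_mem' := fun {f g} hf hg => P_add (X := X) (Y := Y) f g hf hg
          neg_mem' := fun {f} hf => P_neg (X := X) (Y := Y) f hf }
      map_mem := fun f => P_map f
      comp_mem := fun {X Y Z} f g hf hg => P_comp (X := X) (Y := Y) (Z := Z) f g hf hg
      inv_mem := fun {X Y} s hs t h1 h2 => P_inv (X := X) (Y := Y) ((uFun S).map s) t (P_map s) h1 h2 }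
  exact CategoryTheory.Functor.ext ho (fun X Y f => generation Fam (X := X) (Y := Y) f)

end PartFive

/-- Theorem: `u : A ⥤ A[S⁻¹]_add` is the universal additive functor making the
elements of `S` invertible: an additive functor `F : A ⥤ A'` factors through `u` if and
only if it sends every element of `S` to an isomorphism, and in that case the
factorization is unique. -/
theorem statement0 {A : Type u} [Category.{v} A] [Preadditive A] [HasZeroObject A]
    [HasFiniteBiproducts A] (S : MorphismProperty A)
    {A' : Type u'} [Category.{v'} A'] [Preadditive A'] [HasFiniteBiproducts A']
    (F : A ⥤ A') [F.Additive] :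
    ((∃ G : AddLoc S ⥤ A', G.Additive ∧ uFun S ⋙ G = F) ↔
      ∀ ⦃X Y : A⦄ (s : X ⟶ Y), S s → IsIso (F.map s)) ∧
    ((∀ ⦃X Y : A⦄ (s : X ⟶ Y), S s → IsIso (F.map s)) →
      ∃! G : AddLoc S ⥤ A', G.Additive ∧ uFun S ⋙ G = F) := by
  refine ⟨⟨?_, existence S F⟩, fun hF => ?_⟩
  · rintro ⟨G, -, rfl⟩ X Y s hs
    have := isIso_uFun_map S s hs
    exact inferInstanceAs (IsIso (G.map ((uFun S).map s)))
  · obtain ⟨G, hG, e⟩ := existence S F hF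
    refine ⟨G, ⟨hG, e⟩, ?_⟩
    rintro G' ⟨hG', e'⟩
    exact uniqueness S G' G (e'.trans e.symm)
end

section
/- Suppose A is an additive category and S is a class of morphisms of A containing the identity morphisms of all objects of A and closed under direct sums (if s, s' ∈ S then s ⊕ s' ∈ S). Then the Gabriel–Zisman localization A[S⁻¹] is an additive category, and the localization functor A → A[S⁻¹] is an additive functor. -/
open CategoryTheory Limits Pretriangulated ZeroObject

universe v u v' u'

namespace GZAux

lemma stable_pair {C : Type u} [Category.{v} C] (W : MorphismProperty C) [W.RespectsIso]
    (H : ∀ ⦃X Y X' Y' : C⦄ (s : X ⟶ Y) (s' : X' ⟶ Y'), W s → W s' →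
      ∃ (b : BinaryFan X X') (c : BinaryFan Y Y') (_ : IsLimit b) (_ : IsLimit c)
        (φ : b.pt ⟶ c.pt), W φ ∧ φ ≫ c.fst = b.fst ≫ s ∧ φ ≫ c.snd = b.snd ≫ s') :
    W.IsStableUnderProductsOfShape WalkingPair where
  condition X₁ X₂ c₁ c₂ hc₁ hc₂ f hf α hα := by
    obtain ⟨b, c, hb, hc, φ, hφ, h1, h2⟩ := H (f.app ⟨.left⟩) (f.app ⟨.right⟩) (hf _) (hf _)
    let hb' := (IsLimit.postcomposeHomEquiv (diagramIsoPair X₁) c₁).symm hc₁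
    let hc' := (IsLimit.postcomposeHomEquiv (diagramIsoPair X₂) c₂).symm hc₂
    have k1 := hα ⟨.left⟩
    have k2 := hα ⟨.right⟩
    refine (W.arrow_mk_iso_iff (Arrow.isoMk (f := Arrow.mk α) (g := Arrow.mk φ) (hb'.conePointUniqueUpToIso hb)
      (hc'.conePointUniqueUpToIso hc) ?_)).2 hφ
    have e1 : (hb'.conePointUniqueUpToIso hb).hom ≫ b.fst = c₁.π.app ⟨.left⟩ :=
      (hb'.conePointUniqueUpToIso_hom_comp hb ⟨.left⟩).trans (Category.comp_id _)
    have e2 : (hc'.conePointUniqueUpToIso hc).hom ≫ c.fst = c₂.π.app ⟨.left⟩ :=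
      (hc'.conePointUniqueUpToIso_hom_comp hc ⟨.left⟩).trans (Category.comp_id _)
    have e3 : (hb'.conePointUniqueUpToIso hb).hom ≫ b.snd = c₁.π.app ⟨.right⟩ :=
      (hb'.conePointUniqueUpToIso_hom_comp hb ⟨.right⟩).trans (Category.comp_id _)
    have e4 : (hc'.conePointUniqueUpToIso hc).hom ≫ c.snd = c₂.π.app ⟨.right⟩ :=
      (hc'.conePointUniqueUpToIso_hom_comp hc ⟨.right⟩).trans (Category.comp_id _)
    apply BinaryFan.IsLimit.hom_ext hc
    · refine (Category.assoc _ _ _).trans ((congrArg (_ ≫ ·) h1).trans ?_)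
      refine (Category.assoc _ _ _).symm.trans ((congrArg (· ≫ _) e1).trans ?_)
      exact (k1.symm.trans (congrArg (α ≫ ·) e2.symm)).trans (Category.assoc _ _ _).symm
    · refine (Category.assoc _ _ _).trans ((congrArg (_ ≫ ·) h2).trans ?_)
      refine (Category.assoc _ _ _).symm.trans ((congrArg (· ≫ _) e3).trans ?_)
      exact (k2.symm.trans (congrArg (α ≫ ·) e4.symm)).trans (Category.assoc _ _ _).symm

lemma stable_empty {C : Type u} [Category.{v} C] (W : MorphismProperty C) [W.RespectsIso]
    [W.ContainsIdentities] : W.IsStableUnderProductsOfShape PEmpty.{1} := by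
  refine MorphismProperty.IsStableUnderProductsOfShape.mk _ _ ?_
  intro X₁ X₂ _ _ f _
  have : ∀ j, IsIso (f j) := fun j => j.elim
  have : IsIso (Limits.Pi.map f) :=
    ⟨Limits.Pi.map (fun j => j.elim), by ext j; exact j.elim, by ext j; exact j.elim⟩
  exact W.of_isIso _

lemma closure_sum {A : Type u} [Category.{v} A] [Preadditive A] [HasBinaryBiproducts A]
    (S : MorphismProperty A)
    (hsum : ∀ ⦃X Y X' Y' : A⦄ (s : X ⟶ Y) (s' : X' ⟶ Y'),
      S s → S s' → S (biprod.map s s')) ⦃X Y X' Y' : A⦄ (s : X ⟶ Y) (s' : X' ⟶ Y')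
    (h : S.isoClosure s) (h' : S.isoClosure s') : S.isoClosure (biprod.map s s') := by
  obtain ⟨_, _, t, ht, ⟨e⟩⟩ := h
  obtain ⟨_, _, t', ht', ⟨e'⟩⟩ := h'
  refine ⟨_, _, _, hsum _ _ ht ht', ⟨Arrow.isoMk
    (biprod.mapIso (Arrow.leftFunc.mapIso e) (Arrow.leftFunc.mapIso e'))
    (biprod.mapIso (Arrow.rightFunc.mapIso e) (Arrow.rightFunc.mapIso e')) ?_⟩⟩
  change biprod.map (Arrow.Hom.left e.hom) (Arrow.Hom.left e'.hom) ≫ biprod.map s s' =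
    biprod.map t t' ≫ biprod.map (Arrow.Hom.right e.hom) (Arrow.Hom.right e'.hom)
  have w1 := e.hom.w
  have w2 := e'.hom.w
  dsimp at *
  ext <;> simp [w1, w2]

/-- Preadditive structure from biproducts and negatives. -/
noncomputable abbrev preadd (D : Type u) [Category.{v} D] [HasZeroMorphisms D] [HasBinaryBiproducts D]
    (n : ∀ X : D, X ⟶ X)
    (hn : ∀ X : D, biprod.lift (𝟙 X) (𝟙 X) ≫ biprod.desc (n X) (𝟙 X) = 0) :
    Preadditive D where
  homGroup X Y :=
    { SemiadditiveOfBinaryBiproducts.addCommMonoidHomOfHasBinaryBiproducts X Y with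
      neg := fun f => n X ≫ f
      zsmul := letI := SemiadditiveOfBinaryBiproducts.addCommMonoidHomOfHasBinaryBiproducts X Y
        letI : Neg (X ⟶ Y) := ⟨fun f => n X ≫ f⟩
        zsmulRec
      neg_add_cancel := fun f => by
        change biprod.lift (𝟙 X) (𝟙 X) ≫ biprod.desc (n X ≫ f) f = 0
        have : biprod.desc (n X ≫ f) f = biprod.desc (n X) (𝟙 X) ≫ f := by ext <;> simp
        rw [this, reassoc_of% (hn X), zero_comp] }
  add_comp _ _ _ f g h := SemiadditiveOfBinaryBiproducts.add_comp f g h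
  comp_add _ _ _ f g h := SemiadditiveOfBinaryBiproducts.comp_add f g h

lemma main {A : Type u} [Category.{v} A] [Preadditive A] [HasFiniteBiproducts A]
    {D : Type u'} [Category.{v'} D] (L : A ⥤ D) (hL : Function.Surjective L.obj)
    [PreservesLimitsOfShape (Discrete WalkingPair) L]
    [PreservesColimitsOfShape (Discrete WalkingPair) L]
    [PreservesLimitsOfShape (Discrete PEmpty.{1}) L]
    [PreservesColimitsOfShape (Discrete PEmpty.{1}) L] :
    ∃ (h : Preadditive D),
      (@HasFiniteBiproducts D _ (@Preadditive.preadditiveHasZeroMorphisms _ _ h)) ∧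
      (@Functor.Additive A D _ _ _ h L) := by
  have hz : IsZero (L.obj 0) := by
    have hT : IsTerminal (L.obj 0) := IsTerminal.isTerminalObj L _ (isZero_zero A).isTerminal
    have hI : IsInitial (L.obj 0) := IsInitial.isInitialObj L _ (isZero_zero A).isInitial
    exact ⟨fun Y => ⟨⟨⟨hI.to Y⟩, fun _ => hI.hom_ext _ _⟩⟩,
      fun Y => ⟨⟨⟨hT.from Y⟩, fun _ => hT.hom_ext _ _⟩⟩⟩
  let _ : HasZeroMorphisms D := hz.hasZeroMorphisms
  have : L.PreservesZeroMorphisms := ⟨fun X Y => by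
    have : (0 : X ⟶ Y) = (0 : X ⟶ 0) ≫ (0 : 0 ⟶ Y) := by simp
    rw [this, L.map_comp, hz.eq_of_tgt (L.map (0 : X ⟶ 0)) 0, zero_comp]⟩
  have : PreservesBinaryBiproducts L := ⟨fun {X Y} => ⟨fun {b} hb => ⟨{
      isLimit := IsLimit.ofIsoLimit
          ((IsLimit.postcomposeHomEquiv (diagramIsoPair _) (L.mapCone b.toCone)).symm
            (isLimitOfPreserves L hb.isLimit)) <|
        Cone.ext (Iso.refl _) fun j => by
          rcases j with ⟨⟨⟩⟩ <;>
          exact (Category.comp_id _).trans (Category.id_comp _).symm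
      isColimit := IsColimit.ofIsoColimit
          ((IsColimit.precomposeInvEquiv (diagramIsoPair _) (L.mapCocone b.toCocone)).symm
            (isColimitOfPreserves L hb.isColimit)) <|
        Cocone.ext (Iso.refl _) fun j => by
          rcases j with ⟨⟨⟩⟩ <;>
          exact (Category.comp_id _).trans (Category.id_comp _) }⟩⟩⟩
  have : HasBinaryBiproducts A := hasBinaryBiproducts_of_finite_biproducts A
  have : HasBinaryBiproducts D := ⟨fun X Y => by
    obtain ⟨X, rfl⟩ := hL X
    obtain ⟨Y, rfl⟩ := hL Y
    infer_instance⟩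
  have key : ∀ {X Y : A} (f g : X ⟶ Y), L.map (f + g) =
      biprod.lift (𝟙 (L.obj X)) (𝟙 (L.obj X)) ≫ biprod.desc (L.map f) (L.map g) := by
    intro X Y f g
    rw [biprod.add_eq_lift_id_desc, L.map_comp, ← biprod.lift_mapBiprod,
      ← biprod.mapBiprod_hom_desc, Category.assoc, Iso.inv_hom_id_assoc, L.map_id]
  have hn : ∀ X : D, ∃ n : X ⟶ X,
      biprod.lift (𝟙 X) (𝟙 X) ≫ biprod.desc n (𝟙 X) = 0 := by
    intro X
    obtain ⟨X, rfl⟩ := hL X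
    refine ⟨L.map (-𝟙 X), ?_⟩
    have := key (-𝟙 X) (𝟙 X)
    rw [neg_add_cancel, L.map_zero, L.map_id] at this
    exact this.symm
  choose n hn using hn
  refine ⟨preadd D n hn, ?_, ?_⟩
  · let _ := preadd D n hn
    have : HasTerminal D := hz.isTerminal.hasTerminal
    have : HasBinaryProducts D := inferInstance
    have : HasFiniteProducts D := hasFiniteProducts_of_has_binary_and_terminal
    exact HasFiniteBiproducts.of_hasFiniteProducts
  · exact @Functor.Additive.mk _ _ _ _ _ (preadd D n hn) L (fun {X Y f g} => key f g)

end GZAux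
attribute [local instance] Limits.hasBinaryBiproducts_of_finite_biproducts

/-- Proposition: if `S` contains all identities and is closed under direct sums, then
the Gabriel–Zisman localization `A[S⁻¹]` is additive and the localization functor is
additive. -/
theorem statement2 {A : Type u} [Category.{v} A] [Preadditive A] [HasFiniteBiproducts A]
    (S : MorphismProperty A)
    (hid : ∀ X : A, S (𝟙 X))
    (hsum : ∀ ⦃X Y X' Y' : A⦄ (s : X ⟶ Y) (s' : X' ⟶ Y'),
      S s → S s' → S (biprod.map s s')) :
    ∃ (h : Preadditive S.Localization),
      (@HasFiniteBiproducts S.Localization _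
        (@Preadditive.preadditiveHasZeroMorphisms _ _ h)) ∧
      (@Functor.Additive A S.Localization _ _ _ h S.Q) := by
  have hW := GZAux.closure_sum S hsum
  have : S.isoClosure.ContainsIdentities := ⟨fun X => S.le_isoClosure _ (hid X)⟩
  have : S.Q.IsLocalization S.isoClosure := by
    refine Functor.IsLocalization.of_equivalence_source S.Q S S.Q S.isoClosure
      (CategoryTheory.Equivalence.refl) ?_ ?_ (Iso.refl _)
    · intro X Y f hf
      exact MorphismProperty.le_isoClosure _ _ (S.le_isoClosure _ hf)
    · rw [MorphismProperty.IsInvertedBy.isoClosure_iff]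
      exact S.Q_inverts
  have : S.isoClosure.IsStableUnderProductsOfShape WalkingPair := by
    refine GZAux.stable_pair _ fun X Y X' Y' s s' h h' => ?_
    exact ⟨_, _, BinaryBiproduct.isLimit X X', BinaryBiproduct.isLimit Y Y', _, hW s s' h h',
      by simp, by simp⟩
  have : S.isoClosure.op.IsStableUnderProductsOfShape WalkingPair := by
    refine GZAux.stable_pair _ fun X Y X' Y' s s' h h' => ?_
    have hl : ∀ X X' : Aᵒᵖ, Nonempty (IsLimit (BinaryFan.mk (P := Opposite.op (X.unop ⊞ X'.unop))
        (biprod.inl : X.unop ⟶ _).op (biprod.inr : X'.unop ⟶ _).op)) := fun X X' =>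
      ⟨BinaryFan.isLimitMk (fun s => (biprod.desc s.fst.unop s.snd.unop).op)
        (fun s => Quiver.Hom.unop_inj (by simp)) (fun s => Quiver.Hom.unop_inj (by simp))
        (fun s m h1 h2 => Quiver.Hom.unop_inj (by
          ext
          · simp [← h1]
          · simp [← h2]))⟩
    refine ⟨_, _, (hl X X').some, (hl Y Y').some, (biprod.map s.unop s'.unop).op,
      hW s.unop s'.unop h h', Quiver.Hom.unop_inj (by simp), Quiver.Hom.unop_inj (by simp)⟩
  have := GZAux.stable_empty S.isoClosure
  have := GZAux.stable_empty S.isoClosure.op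
  have := Localization.preservesProductsOfShape S.Q S.isoClosure WalkingPair
  have := Localization.preservesProductsOfShape S.Q S.isoClosure PEmpty
  have := Localization.preservesProductsOfShape S.Q.op S.isoClosure.op WalkingPair
  have := Localization.preservesProductsOfShape S.Q.op S.isoClosure.op PEmpty
  have : PreservesColimitsOfShape (Discrete WalkingPair) S.Q := by
    have := preservesLimitsOfShape_of_equiv (Discrete.opposite WalkingPair).symm S.Q.op
    exact preservesColimitsOfShape_of_op _ _
  have : PreservesColimitsOfShape (Discrete PEmpty.{1}) S.Q := by
    have := preservesLimitsOfShape_of_equiv (Discrete.opposite PEmpty.{1}).symm S.Q.op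
    exact preservesColimitsOfShape_of_op _ _
  exact GZAux.main S.Q (Localization.Construction.objEquiv S).surjective
end

section
/- Assume that S contains the identity morphisms of all objects of A and is closed under the direct sum operation. Then any morphism of A given by a lower triangular matrix ⊕_{j=1}^{n} S⁻¹_j → ⊕_{j=1}^{n} S⁰_j whose diagonal entries are elements of S (and whose below-diagonal entries are arbitrary morphisms of A) becomes invertible in the Gabriel–Zisman localization A[S⁻¹]. -/
open CategoryTheory Limits Pretriangulated ZeroObject

universe v u v' u'

attribute [local instance] Limits.hasBinaryBiproducts_of_finite_biproducts

/-- Morphisms that become invertible after adding any identity. -/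
def stW {A : Type u} [Category.{v} A] [Preadditive A] [HasFiniteBiproducts A]
    (S : MorphismProperty A) : MorphismProperty A :=
  fun _ _ f => ∀ Z : A, IsIso (S.Q.map (biprod.map f (𝟙 Z)))

section
variable {A : Type u} [Category.{v} A] [Preadditive A] [HasFiniteBiproducts A]
    {S : MorphismProperty A}

theorem stW_iso {X Y : A} (f : X ⟶ Y) [IsIso f] : stW S f := by
  intro Z
  have : IsIso (biprod.map f (𝟙 Z)) :=
    ⟨biprod.map (inv f) (𝟙 Z), by ext <;> simp, by ext <;> simp⟩
  infer_instance

theorem stW_comp {X Y Z : A} {f : X ⟶ Y} {g : Y ⟶ Z} (hf : stW S f) (hg : stW S g) :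
    stW S (f ≫ g) := by
  intro U
  have h : biprod.map (f ≫ g) (𝟙 U) = biprod.map f (𝟙 U) ≫ biprod.map g (𝟙 U) := by
    ext <;> simp
  have := hf U
  have := hg U
  rw [h, Functor.map_comp]
  infer_instance

theorem stW_left {X Y : A} {f : X ⟶ Y} (hf : stW S f) (Z : A) :
    stW S (biprod.map f (𝟙 Z)) := by
  intro U
  have h : biprod.map (biprod.map f (𝟙 Z)) (𝟙 U) =
      (biprod.associator X Z U).hom ≫ biprod.map f (𝟙 (Z ⊞ U)) ≫
        (biprod.associator Y Z U).inv := by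
    ext <;> simp [biprod.associator]
  have := hf (Z ⊞ U)
  rw [h, Functor.map_comp, Functor.map_comp]
  infer_instance

theorem stW_right {X Y : A} {f : X ⟶ Y} (hf : stW S f) (Z : A) :
    stW S (biprod.map (𝟙 Z) f) := by
  have h : biprod.map (𝟙 Z) f =
      (biprod.braiding Z X).hom ≫ biprod.map f (𝟙 Z) ≫ (biprod.braiding Z Y).inv := by
    ext <;> simp
  rw [h]
  exact stW_comp (stW_iso _) (stW_comp (stW_left hf Z) (stW_iso _))

theorem stW_isIso {X Y : A} {f : X ⟶ Y} (hf : stW S f) [HasZeroObject A] :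
    IsIso (S.Q.map f) := by
  have hz : IsZero (0 : A) := isZero_zero A
  have i : ∀ X : A, IsIso (biprod.inl : X ⟶ X ⊞ (0 : A)) := fun X =>
    ⟨biprod.fst, by simp, by
      ext
      · simp⟩
  have := i X
  have := i Y
  have h : f = biprod.inl ≫ biprod.map f (𝟙 (0 : A)) ≫ inv biprod.inl := by
    simp
  have := hf (0 : A)
  rw [h, Functor.map_comp, Functor.map_comp]
  infer_instance

/-- Splitting off the first summand. -/
noncomputable def stE {n : ℕ} (P : Fin (n + 1) → A) :
    (⨁ P) ≅ P 0 ⊞ ⨁ (fun i : Fin n => P i.succ) where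
  hom := biprod.lift (biproduct.π P 0) (biproduct.lift fun i => biproduct.π P i.succ)
  inv := biprod.desc (biproduct.ι P 0) (biproduct.desc fun i => biproduct.ι P i.succ)
  hom_inv_id := by
    simp only [biprod.lift_desc, biproduct.lift_desc]
    rw [← Fin.sum_univ_succ (fun i => biproduct.π P i ≫ biproduct.ι P i)]
    exact biproduct.total
  inv_hom_id := by
    ext i j
    · simp
    · simp [biproduct.ι_π_ne P (Fin.succ_ne_zero _).symm]
    · simp [biproduct.ι_π_ne P (Fin.succ_ne_zero _)]
    · by_cases h : i = j
      · subst h; simp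
      · have h' : i.succ ≠ Fin.succ _ := fun e => h (Fin.succ_injective _ e)
        simp [biproduct.ι_π_ne P h', biproduct.ι_π_ne _ h]

theorem stW_matrix (hS : ∀ ⦃X Y : A⦄ (s : X ⟶ Y), S s → stW S s)
    (n : ℕ) : ∀ (P Q : Fin n → A) (m : ∀ k l : Fin n, P k ⟶ Q l)
    (_ : ∀ k : Fin n, S (m k k))
    (_ : ∀ k l : Fin n, l < k → m k l = 0), stW S (biproduct.matrix m) := by
  induction n with
  | zero =>
    intro P Q m _ _
    have : IsIso (biproduct.matrix m) := 
      ⟨0, by ext j; exact j.elim0, by ext j; exact j.elim0⟩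
    exact stW_iso _
  | succ n ih =>
    intro P Q m hd ht
    have hT := ih (fun i => P i.succ) (fun i => Q i.succ) (fun k l => m k.succ l.succ)
      (fun k => hd _) (fun k l h => ht _ _ (Fin.succ_lt_succ_iff.2 h))
    let f : P 0 ⟶ ⨁ (fun i : Fin n => Q i.succ) := biproduct.lift fun i => m 0 i.succ
    let u : P 0 ⊞ (⨁ (fun i : Fin n => Q i.succ)) ⟶ P 0 ⊞ (⨁ (fun i : Fin n => Q i.succ)) :=
      biprod.desc (biprod.lift (𝟙 _) f) biprod.inr
    have hu : IsIso u :=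
      ⟨biprod.desc (biprod.lift (𝟙 _) (-f)) biprod.inr,
        by ext <;> simp [u], by ext <;> simp [u]⟩
    have h : biproduct.matrix m = (stE P).hom ≫
        (biprod.map (𝟙 _) (biproduct.matrix (fun k l : Fin n => m k.succ l.succ)) ≫ u ≫
          biprod.map (m 0 0) (𝟙 _)) ≫ (stE Q).inv := by
      rw [← Iso.inv_comp_eq, ← Category.assoc, Iso.eq_comp_inv]
      ext i j
      · simp [stE, u, f]
      · simp [stE, u, f]
      · simp [stE, u, f, ht _ _ (Fin.succ_pos _)]
      · simp [stE, u, f]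
    rw [h]
    exact stW_comp (stW_iso _) (stW_comp (stW_comp (stW_right hT _)
      (stW_comp (stW_iso _) (stW_left (hS _ (hd 0)) _))) (stW_iso _))

end

/-- Proposition: if `S` contains all identities and is closed under direct sums, then
any lower triangular matrix morphism between finite biproducts, with diagonal entries in
`S`, becomes invertible in the Gabriel–Zisman localization `A[S⁻¹]`. -/
theorem statement12 {A : Type u} [Category.{v} A] [Preadditive A] [HasZeroObject A]
    [HasFiniteBiproducts A] (S : MorphismProperty A)
    (hid : ∀ X : A, S (𝟙 X))
    (hsum : ∀ ⦃X Y X' Y' : A⦄ (s : X ⟶ Y) (s' : X' ⟶ Y'),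
      S s → S s' → S (biprod.map s s'))
    (n : ℕ) (P Q : Fin n → A) (m : ∀ k l : Fin n, P k ⟶ Q l)
    (hdiag : ∀ k : Fin n, S (m k k))
    (htriang : ∀ k l : Fin n, l < k → m k l = 0) :
    IsIso (S.Q.map (biproduct.matrix m)) := by
  exact stW_isIso (stW_matrix (fun _ _ s hs Z =>
    S.Q_inverts _ (hsum s (𝟙 Z) hs (hid Z))) n P Q m hdiag htriang)
end
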